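/- lex(n, P_5^{1432}) = Θ(n log n); that is, there exist constants c, C > 0 such that for all n ≥ 2, c·n·log n ≤ lex(n, P_5^{1432}) ≤ C·n·log n. -/

import Mathlib

/-- An edge-ordered graph: a finite simple graph on vertex set `Fin nv`
together with a labeling of (potential) edges.  The edge-order is the order of
the labels; the labeling is required to be injective on the edge set via
`EOGraph.Valid`. -/
structure EOGraph where
  nv : ℕ
  graph : SimpleGraph (Fin nv)
  label : Sym2 (Fin nv) → ℕ

namespace EOGraph

/-- The labeling is injective on the edge set, hence defines a linear order on the edges. -/
def Valid (G : EOGraph) : Prop :=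
  ∀ e ∈ G.graph.edgeSet, ∀ f ∈ G.graph.edgeSet, G.label e = G.label f → e = f

/-- The number of edges of an edge-ordered graph. -/
noncomputable def edges (G : EOGraph) : ℕ := G.graph.edgeSet.ncard

/-- `G.Contains H`: some subgraph of `G`, with the edge-order induced from `G`,
is isomorphic to `H` (via a graph isomorphism preserving the relative order of edges). -/
def Contains (G H : EOGraph) : Prop :=
  ∃ f : Fin H.nv ↪ Fin G.nv,
    (∀ a b, H.graph.Adj a b → G.graph.Adj (f a) (f b)) ∧
    ∀ a b c d, H.graph.Adj a b → H.graph.Adj c d →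
      (H.label s(a, b) < H.label s(c, d) ↔ G.label s(f a, f b) < G.label s(f c, f d))

/-- `G` avoids `H` if no subgraph of `G` (with the induced edge-order) is isomorphic to `H`. -/
def Avoids (G H : EOGraph) : Prop := ¬ G.Contains H

/-- `G` avoids a family if it avoids every member. -/
def AvoidsFam (G : EOGraph) (F : Set EOGraph) : Prop := ∀ H ∈ F, G.Avoids H

/-- Isomorphism of edge-ordered graphs. -/
def Iso (G H : EOGraph) : Prop :=
  ∃ f : Fin G.nv ≃ Fin H.nv,
    (∀ a b, G.graph.Adj a b ↔ H.graph.Adj (f a) (f b)) ∧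
    ∀ a b c d, G.graph.Adj a b → G.graph.Adj c d →
      (G.label s(a, b) < G.label s(c, d) ↔ H.label s(f a, f b) < H.label s(f c, f d))

end EOGraph

/-- A simple graph `G` can avoid the family `F` if some linear order on its edges
(given by a labeling injective on the edge set) makes it into an edge-ordered graph
avoiding `F`. -/
def CanAvoid {n : ℕ} (G : SimpleGraph (Fin n)) (F : Set EOGraph) : Prop :=
  ∃ L : Sym2 (Fin n) → ℕ, (EOGraph.mk n G L).Valid ∧ (EOGraph.mk n G L).AvoidsFam F

/-- The order chromatic number of a family of edge-ordered graphs: the least chromatic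
number of a finite simple graph that cannot avoid the family (`⊤` if every finite
simple graph can avoid it). -/
noncomputable def orderChrom (F : Set EOGraph) : ℕ∞ :=
  ⨅ (n : ℕ) (G : SimpleGraph (Fin n)) (_ : ¬ CanAvoid G F), G.chromaticNumber

/-- The Turán number `lex(n, F)`: the maximum number of edges of an edge-ordered graph
on `n` vertices avoiding the family `F`. -/
noncomputable def lexFam (n : ℕ) (F : Set EOGraph) : ℕ :=
  sSup {m : ℕ | ∃ G : EOGraph, G.nv = n ∧ G.Valid ∧ G.AvoidsFam F ∧ G.edges = m}

/-- Build a symmetric labeling from a function of the (min, max) of the two endpoints. -/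
def symLabel {N : ℕ} (f : Fin N → Fin N → ℕ) : Sym2 (Fin N) → ℕ :=
  Sym2.lift ⟨fun a b => f (min a b) (max a b), fun a b => by
    show f (min a b) (max a b) = f (min b a) (max b a)
    rw [min_comm, max_comm]⟩

/-- The edge-ordered path on `k` vertices `0, 1, …, k-1`, where the edge `{i, i+1}`
gets label `l[i]`. -/
def pathEO (k : ℕ) (l : List ℕ) : EOGraph where
  nv := k
  graph := SimpleGraph.fromRel (fun a b => (a : ℕ) + 1 = (b : ℕ))
  label := symLabel fun a _ => l.getD (a : ℕ) 0

/-- The edge-ordered path `P_5^{1432}`: edge-order `ab < de < cd < bc`. -/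
def P5_1432 : EOGraph := pathEO 5 [1, 4, 3, 2]

/-!
Upper bound. Let `q v` be the largest label bound under which `v` has at most two incident edges.
If a path `y c v c'` has increasing labels, then `yc` is labelled below `q c'`: otherwise some edge
at `c'` is labelled below `yc` and completes a copy of `P_5^{1432}`. Call an edge `vc` labelled `t`
with `q c ≤ q v ≤ t` dense if at least two edges at `c` have labels in the upper half of the
interval `[q c, t)`. When `vc` and `vc'` are dense and labelled in increasing order, one of these
two edges is a `yc` as above, which makes `q v - q c'` less than half of `q v - q c`; so `v` has
`O(log n)` dense edges. For the other edges at `c` labelled at least `q c`, the distances from `q c`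
to the label contain at most two values in each dyadic range, so there are `O(log n)` of them too.

Lower bound. Join `u` in the first half of the vertices to `v` in the second when their positions
there differ by `2 ^ k - 1`, and order the edges reverse lexicographically. A copy of `P_5^{1432}`
would have to start in the first half, and its last three edges would have shifts satisfying
`2 ^ k + 2 ^ j > 2 ^ i`, although the order forces `k < i` and `j < i`.
-/

open Finset

section Rank

variable {α β : Type*} [LinearOrder β] {s : Set α} {f : α → β} {a b : α}

/-- The number of elements of `s` on which `f` is smaller than at `a`. It replaces the values of `f`
by an initial segment of `ℕ` without changing their order on `s`. -/
noncomputable def rankOn (s : Set α) (f : α → β) (a : α) : ℕ := {b ∈ s | f b < f a}.ncard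

theorem rankOn_lt_rankOn_iff (hs : s.Finite) (ha : a ∈ s) :
    rankOn s f a < rankOn s f b ↔ f a < f b := by
  refine ⟨fun h => lt_of_not_ge fun hba => h.not_ge ?_, fun h => ?_⟩
  · exact Set.ncard_le_ncard (fun x hx => ⟨hx.1, hx.2.trans_le hba⟩) (hs.sep _)
  · refine Set.ncard_lt_ncard (Set.ssubset_iff_of_subset ?_ |>.2 ?_) (hs.sep _)
    · exact fun x hx => ⟨hx.1, hx.2.trans h⟩
    · exact ⟨a, ⟨ha, h⟩, fun ha' => lt_irrefl _ ha'.2⟩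

theorem rankOn_lt_ncard (hs : s.Finite) (ha : a ∈ s) : rankOn s f a < s.ncard :=
  Set.ncard_lt_ncard (Set.ssubset_iff_of_subset (Set.sep_subset _ _) |>.2
    ⟨a, ha, fun ha' => lt_irrefl _ ha'.2⟩) hs

theorem injOn_rankOn (hs : s.Finite) (hf : s.InjOn f) : s.InjOn (rankOn s f) := by
  intro a ha b hb hab
  apply hf ha hb
  by_contra hne
  rcases lt_or_gt_of_ne hne with h | h
  · exact ((rankOn_lt_rankOn_iff hs ha).2 h).ne hab
  · exact ((rankOn_lt_rankOn_iff hs hb).2 h).ne hab.symm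

end Rank

namespace EOGraph

theorem edges_le_choose_two (G : EOGraph) : G.edges ≤ G.nv.choose 2 := by
  classical
  have h := G.graph.card_edgeFinset_le_card_choose_two
  rwa [← Set.ncard_coe_finset, SimpleGraph.coe_edgeFinset, Fintype.card_fin] at h

theorem edges_le_lexFam {G : EOGraph} {F : Set EOGraph} (hG : G.Valid) (hF : G.AvoidsFam F) :
    G.edges ≤ lexFam G.nv F := by
  refine le_csSup ⟨G.nv.choose 2, ?_⟩ ⟨G, rfl, hG, hF, rfl⟩
  rintro _ ⟨H, hH, -, -, rfl⟩
  exact hH ▸ H.edges_le_choose_two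

theorem lexFam_le {n m : ℕ} {F : Set EOGraph}
    (h : ∀ G : EOGraph, G.nv = n → G.Valid → G.AvoidsFam F → G.edges ≤ m) : lexFam n F ≤ m := by
  apply csSup_le'
  rintro _ ⟨G, hn, hG, hF, rfl⟩
  exact h G hn hG hF

theorem contains_mk_iff {G : EOGraph} {n : ℕ} {H : SimpleGraph (Fin n)} {r : Sym2 (Fin n) → ℕ} :
    G.Contains ⟨n, H, r⟩ ↔ ∃ f : Fin n ↪ Fin G.nv,
      (∀ e ∈ H.edgeSet, e.map f ∈ G.graph.edgeSet) ∧
      ∀ e ∈ H.edgeSet, ∀ e' ∈ H.edgeSet,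
        (r e < r e' ↔ G.label (e.map f) < G.label (e'.map f)) := by
  simp only [Contains, Sym2.forall, Sym2.map_mk, SimpleGraph.mem_edgeSet]
  refine exists_congr fun f => and_congr_right fun _ => ?_
  exact ⟨fun h a b hab c d hcd => h a b c d hab hcd, fun h a b c d hab hcd => h a b hab c d hcd⟩

end EOGraph

theorem symLabel_mk_of_le {N : ℕ} (f : Fin N → Fin N → ℕ) {a b : Fin N} (h : a ≤ b) :
    symLabel f s(a, b) = f a b := by
  simp only [symLabel, Sym2.lift_mk, min_eq_left h, max_eq_right h]

section Path

variable {k : ℕ} {l : List ℕ}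

theorem mem_edgeSet_fromRel_succ {e : Sym2 (Fin (k + 1))} :
    e ∈ (SimpleGraph.fromRel fun a b : Fin (k + 1) => (a : ℕ) + 1 = b).edgeSet ↔
      ∃ i : Fin k, s(i.castSucc, i.succ) = e := by
  induction e with
  | _ a b =>
    rw [SimpleGraph.mem_edgeSet, SimpleGraph.fromRel_adj]
    simp only [Sym2.eq_iff, Fin.ext_iff, Fin.val_castSucc, Fin.val_succ]
    refine ⟨?_, by rintro ⟨i, h⟩; omega⟩
    rintro ⟨-, h | h⟩
    · exact ⟨⟨a, by omega⟩, .inl ⟨rfl, h⟩⟩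
    · exact ⟨⟨b, by omega⟩, .inr ⟨rfl, h⟩⟩

theorem contains_pathEO_iff {G : EOGraph} :
    G.Contains (pathEO (k + 1) l) ↔ ∃ f : Fin (k + 1) ↪ Fin G.nv,
      (∀ i : Fin k, G.graph.Adj (f i.castSucc) (f i.succ)) ∧
      ∀ i j : Fin k, l.getD i 0 < l.getD j 0 ↔
        G.label s(f i.castSucc, f i.succ) < G.label s(f j.castSucc, f j.succ) := by
  have hlabel (i : Fin k) : symLabel (fun a _ => l.getD (a : ℕ) 0) s(i.castSucc, i.succ) =
      l.getD i 0 := symLabel_mk_of_le _ i.castSucc_le_succ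
  simp only [pathEO, EOGraph.contains_mk_iff, mem_edgeSet_fromRel_succ, forall_exists_index,
    forall_apply_eq_imp_iff, hlabel, Sym2.map_mk, SimpleGraph.mem_edgeSet]

end Path

/-- The vertices `v₀ v₁ v₂ v₃ v₄` form, in this order, a copy of `P_5^{1432}` in the graph `G` with
edge labels `r`. -/
structure IsP5Copy {V : Type*} (G : SimpleGraph V) (r : Sym2 V → ℕ) (v₀ v₁ v₂ v₃ v₄ : V) :
    Prop where
  nodup : [v₀, v₁, v₂, v₃, v₄].Nodup
  adj₀₁ : G.Adj v₀ v₁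
  adj₁₂ : G.Adj v₁ v₂
  adj₂₃ : G.Adj v₂ v₃
  adj₃₄ : G.Adj v₃ v₄
  lt₀₃ : r s(v₀, v₁) < r s(v₃, v₄)
  lt₃₂ : r s(v₃, v₄) < r s(v₂, v₃)
  lt₂₁ : r s(v₂, v₃) < r s(v₁, v₂)

theorem contains_P5_1432_iff {G : EOGraph} :
    G.Contains P5_1432 ↔ ∃ v₀ v₁ v₂ v₃ v₄, IsP5Copy G.graph G.label v₀ v₁ v₂ v₃ v₄ := by
  rw [P5_1432, contains_pathEO_iff]
  constructor
  · rintro ⟨f, hadj, hlt⟩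
    exact ⟨f 0, f 1, f 2, f 3, f 4,
      { nodup := by simp [f.injective.eq_iff]
        adj₀₁ := hadj 0
        adj₁₂ := hadj 1
        adj₂₃ := hadj 2
        adj₃₄ := hadj 3
        lt₀₃ := (hlt 0 3).1 (by simp)
        lt₃₂ := (hlt 3 2).1 (by simp)
        lt₂₁ := (hlt 2 1).1 (by simp) }⟩
  · rintro ⟨v₀, v₁, v₂, v₃, v₄, h⟩
    have hinj : Function.Injective ![v₀, v₁, v₂, v₃, v₄] :=
      List.nodup_ofFn.1 (by simpa [List.ofFn_succ] using h.nodup)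
    refine ⟨⟨![v₀, v₁, v₂, v₃, v₄], hinj⟩, ?_, ?_⟩
    · simp [Fin.forall_fin_succ, h.adj₀₁, h.adj₁₂, h.adj₂₃, h.adj₃₄]
    · have h₀₂ := h.lt₀₃.trans h.lt₃₂
      have h₃₁ := h.lt₃₂.trans h.lt₂₁
      have h₀₁ := h₀₂.trans h.lt₂₁
      simp [Fin.forall_fin_succ, h.lt₀₃, h.lt₃₂, h.lt₂₁, h₀₂, h₃₁, h₀₁, h.lt₀₃.le, h.lt₃₂.le,
        h.lt₂₁.le, h₀₂.le, h₃₁.le, h₀₁.le]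

theorem log_two_succ_lt_log_two_succ_of_two_mul_lt {a b : ℕ} (h : 2 * a < b) :
    Nat.log 2 (a + 1) < Nat.log 2 (b + 1) :=
  calc Nat.log 2 (a + 1) < Nat.log 2 (a + 1) + 1 := Nat.lt_succ_self _
    _ = Nat.log 2 ((a + 1) * 2) := (Nat.log_mul_base one_lt_two a.succ_ne_zero).symm
    _ ≤ Nat.log 2 (b + 1) := Nat.log_mono_right (by lia)

theorem card_le_mul_log_two_add_one_of_card_filter_lt {α : Type*} [DecidableEq α]
    {s : Finset α} {f : α → ℕ} {k M : ℕ} (hM : ∀ a ∈ s, f a < M)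
    (hk : ∀ a ∈ s, #{b ∈ s | b ≠ a ∧ f b ≤ f a ∧ f a ≤ 2 * f b} < k) :
    #s ≤ k * (Nat.log 2 M + 1) := by
  have hmaps : ∀ a ∈ s, Nat.log 2 (f a + 1) ∈ range (Nat.log 2 M + 1) := fun a ha =>
    mem_range_succ_iff.2 (Nat.log_mono_right (hM a ha))
  refine (card_le_mul_card_image_of_maps_to hmaps k fun i _ => ?_).trans_eq (by rw [card_range])
  obtain hempty | hne := {a ∈ s | Nat.log 2 (f a + 1) = i}.eq_empty_or_nonempty
  · simp [hempty]
  obtain ⟨a, ha, hmax⟩ := exists_max_image _ f hne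
  have hsub : {a ∈ s | Nat.log 2 (f a + 1) = i}.erase a ⊆
      {b ∈ s | b ≠ a ∧ f b ≤ f a ∧ f a ≤ 2 * f b} := by
    intro b hb
    obtain ⟨hba, hb⟩ := mem_erase.1 hb
    refine mem_filter.2 ⟨(mem_filter.1 hb).1, hba, hmax b hb, le_of_not_gt fun h => ?_⟩
    have := log_two_succ_lt_log_two_succ_of_two_mul_lt h
    rw [(mem_filter.1 ha).2, (mem_filter.1 hb).2] at this
    exact this.false
  rw [← card_erase_add_one ha]
  exact (card_le_card hsub).trans_lt (hk a (mem_filter.1 ha).1)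

section UpperBound

variable {V : Type*} [Fintype V]

theorem ncard_edgeSet_le_card_mul {G : SimpleGraph V} {S : V → Finset V} {k : ℕ}
    (hcard : ∀ v, #(S v) ≤ k) (hcover : ∀ u v, G.Adj u v → v ∈ S u ∨ u ∈ S v) :
    G.edgeSet.ncard ≤ Fintype.card V * k := by
  classical
  have hsub : G.edgeSet ⊆ univ.biUnion fun v => (S v).image fun w => s(v, w) := by
    intro e he
    induction e with
    | _ u v =>
      rw [mem_coe, mem_biUnion]
      obtain h | h := hcover u v he
      · exact ⟨u, mem_univ u, mem_image_of_mem _ h⟩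
      · exact ⟨v, mem_univ v, mem_image.2 ⟨u, h, Sym2.eq_swap⟩⟩
  calc G.edgeSet.ncard ≤ #(univ.biUnion fun v => (S v).image fun w => s(v, w)) :=
        (Set.ncard_le_ncard hsub (finite_toSet _)).trans_eq (Set.ncard_coe_finset _)
    _ ≤ Fintype.card V * k :=
        card_biUnion_le_card_mul _ _ _ fun v _ => card_image_le.trans (hcard v)

variable (G : SimpleGraph V) [DecidableRel G.Adj] (r : Sym2 V → ℕ) (M : ℕ)

/-- The neighbours of `v` along edges labelled below `t`. -/
def lowNeighbors (t : ℕ) (v : V) : Finset V := {x | G.Adj v x ∧ r s(v, x) < t}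

/-- The largest label bound `t ≤ M` under which `v` has at most two incident edges. -/
def threshold (v : V) : ℕ := Nat.findGreatest (fun t => #(lowNeighbors G r t v) ≤ 2) M

/-- The neighbours `y` of `c` whose edge label lies below that of `bc`, and at most half as far from
it as `threshold c`: in the upper half of the interval from `threshold c` to the label of `bc`. -/
def upperHalf (b c : V) : Finset V :=
  {y | G.Adj c y ∧ r s(c, y) < r s(b, c) ∧ r s(b, c) + threshold G r M c ≤ 2 * r s(c, y)}

/-- The neighbours `b` of `v` for which `bv` lies above the threshold of `v` and its upper half at
`v` contains at most one edge. -/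
def sparseNeighbors (v : V) : Finset V :=
  {b | G.Adj b v ∧ threshold G r M v ≤ r s(b, v) ∧ #(upperHalf G r M b v) ≤ 1}

/-- The neighbours `c` of `v` of no larger threshold for which `vc` lies above the threshold of `v`
and its upper half at `c` contains at least two edges. -/
def denseNeighbors (v : V) : Finset V :=
  {c | G.Adj v c ∧ threshold G r M c ≤ threshold G r M v ∧ threshold G r M v ≤ r s(v, c) ∧
    1 < #(upperHalf G r M v c)}

variable {G r M}

theorem card_lowNeighbors_threshold_le (v : V) : #(lowNeighbors G r (threshold G r M v) v) ≤ 2 :=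
  Nat.findGreatest_spec (P := fun t => #(lowNeighbors G r t v) ≤ 2) M.zero_le
    (by simp [lowNeighbors])

theorem two_lt_card_lowNeighbors {t : ℕ} {v : V} (ht : threshold G r M v < t) (htM : t ≤ M) :
    2 < #(lowNeighbors G r t v) :=
  not_le.1 (Nat.findGreatest_is_greatest (P := fun t => #(lowNeighbors G r t v) ≤ 2) ht htM)

theorem card_sparseNeighbors_le (hr : G.edgeSet.InjOn r) (hM : ∀ e ∈ G.edgeSet, r e < M) (v : V) :
    #(sparseNeighbors G r M v) ≤ 2 * (Nat.log 2 M + 1) := by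
  classical
  refine card_le_mul_log_two_add_one_of_card_filter_lt (f := fun b => r s(b, v) - threshold G r M v)
    (fun b hb => ?_) (fun b hb => Nat.lt_succ_of_le ?_)
  · simp only [sparseNeighbors, mem_filter] at hb
    exact (Nat.sub_le _ _).trans_lt (hM _ hb.2.1)
  · simp only [sparseNeighbors, mem_filter, mem_univ, true_and] at hb
    refine (card_le_card fun y hy => ?_).trans hb.2.2
    rw [mem_filter, sparseNeighbors, mem_filter] at hy
    rw [upperHalf, mem_filter]
    obtain ⟨⟨-, hyv, hqy, -⟩, hne, hle, hle'⟩ := hy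
    have hr_ne : r s(y, v) ≠ r s(b, v) := fun h => hne (Sym2.congr_left.1 (hr hyv hb.1 h))
    rw [Sym2.eq_swap (a := v)]
    exact ⟨mem_univ y, hyv.symm, by lia, by lia⟩

variable (hfree : ∀ v₀ v₁ v₂ v₃ v₄, ¬ IsP5Copy G r v₀ v₁ v₂ v₃ v₄)
include hfree

theorem label_lt_threshold (hr : G.edgeSet.InjOn r) (hM : ∀ e ∈ G.edgeSet, r e < M)
    {v₁ v₂ v₃ v₄ : V} (h₁₂ : G.Adj v₁ v₂) (h₂₃ : G.Adj v₂ v₃) (h₃₄ : G.Adj v₃ v₄) (hne : v₁ ≠ v₄)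
    (hlt₃₂ : r s(v₃, v₄) < r s(v₂, v₃)) (hlt₂₁ : r s(v₂, v₃) < r s(v₁, v₂)) :
    r s(v₃, v₄) < threshold G r M v₁ := by
  classical
  by_contra! hle
  obtain ⟨v₀, hv₀, hnotMem⟩ : ∃ v₀ ∈ lowNeighbors G r (r s(v₃, v₄) + 1) v₁,
      v₀ ∉ ({v₃, v₄} : Finset V) :=
    exists_mem_notMem_of_card_lt_card (card_le_two.trans_lt
      (two_lt_card_lowNeighbors (Nat.lt_succ_of_le hle) (hM _ h₃₄)))
  simp only [lowNeighbors, mem_filter, mem_univ, true_and, mem_insert, mem_singleton, not_or,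
    Nat.lt_succ_iff] at hv₀ hnotMem
  obtain ⟨h₁₀, hle₀₃⟩ := hv₀
  have h₁₃ : v₁ ≠ v₃ := by
    rintro rfl
    exact hlt₂₁.ne (congrArg r Sym2.eq_swap)
  have h₂₀ : v₀ ≠ v₂ := by
    rintro rfl
    exact (hle₀₃.trans_lt (hlt₃₂.trans hlt₂₁)).false
  have h₂₄ : v₂ ≠ v₄ := by
    rintro rfl
    exact hlt₃₂.ne (congrArg r Sym2.eq_swap)
  have hne₀₃ : r s(v₁, v₀) ≠ r s(v₃, v₄) := fun h => by
    have := hr h₁₀ h₃₄ h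
    simp [h₁₃, hne] at this
  exact hfree v₀ v₁ v₂ v₃ v₄
    { nodup := by simp [h₁₀.ne', h₂₀, hnotMem, h₁₂.ne, h₁₃, hne, h₂₃.ne, h₂₄, h₃₄.ne]
      adj₀₁ := h₁₀.symm
      adj₁₂ := h₁₂
      adj₂₃ := h₂₃
      adj₃₄ := h₃₄
      lt₀₃ := Sym2.eq_swap (a := v₁) ▸ hle₀₃.lt_of_ne hne₀₃
      lt₃₂ := hlt₃₂
      lt₂₁ := hlt₂₁ }

theorem two_mul_threshold_sub_lt (hr : G.edgeSet.InjOn r) (hM : ∀ e ∈ G.edgeSet, r e < M)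
    {v c c' : V} (hc : c ∈ denseNeighbors G r M v) (hc' : c' ∈ denseNeighbors G r M v)
    (hlt : r s(v, c) < r s(v, c')) :
    2 * (threshold G r M v - threshold G r M c') < threshold G r M v - threshold G r M c := by
  simp only [denseNeighbors, mem_filter, mem_univ, true_and] at hc hc'
  obtain ⟨hvc, -, hqv, hdense⟩ := hc
  obtain ⟨y, hy, hyc'⟩ := exists_mem_ne hdense c'
  simp only [upperHalf, mem_filter, mem_univ, true_and] at hy
  obtain ⟨hcy, hylt, hyge⟩ := hy
  have := label_lt_threshold hfree hr hM hc'.1.symm hvc hcy hyc'.symm hylt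
    (Sym2.eq_swap (a := v) (b := c') ▸ hlt)
  lia

theorem card_denseNeighbors_le (hr : G.edgeSet.InjOn r) (hM : ∀ e ∈ G.edgeSet, r e < M) (v : V) :
    #(denseNeighbors G r M v) ≤ Nat.log 2 M + 1 := by
  classical
  rw [← one_mul (Nat.log 2 M + 1)]
  refine card_le_mul_log_two_add_one_of_card_filter_lt
    (f := fun c => threshold G r M v - threshold G r M c) (fun c hc => ?_) (fun c hc => ?_)
  · simp only [denseNeighbors, mem_filter] at hc
    exact (Nat.sub_le _ _).trans_lt (hc.2.2.2.1.trans_lt (hM _ hc.2.1))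
  · rw [Nat.lt_one_iff, card_eq_zero, filter_eq_empty_iff]
    rintro c' hc' ⟨hne, hle, hle'⟩
    have hadj {c : V} (hc : c ∈ denseNeighbors G r M v) : G.Adj v c := (mem_filter.1 hc).2.1
    have hr_ne : r s(v, c) ≠ r s(v, c') := fun h =>
      hne (Sym2.congr_right.1 (hr (hadj hc) (hadj hc') h)).symm
    obtain h | h := hr_ne.lt_or_gt
    · have := two_mul_threshold_sub_lt hfree hr hM hc hc' h
      lia
    · have := two_mul_threshold_sub_lt hfree hr hM hc' hc h
      lia

omit [DecidableRel G.Adj] in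
theorem ncard_edgeSet_le_of_label_lt (hr : G.edgeSet.InjOn r) (hM : ∀ e ∈ G.edgeSet, r e < M) :
    G.edgeSet.ncard ≤ Fintype.card V * (3 * Nat.log 2 M + 5) := by
  classical
  let S (v : V) : Finset V :=
    lowNeighbors G r (threshold G r M v) v ∪ (sparseNeighbors G r M v ∪ denseNeighbors G r M v)
  have hcover {b c : V} (hbc : G.Adj b c) (hq : threshold G r M c ≤ threshold G r M b) :
      c ∈ S b ∨ b ∈ S c := by
    simp only [S, lowNeighbors, sparseNeighbors, denseNeighbors, mem_union, mem_filter, mem_univ,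
      true_and, hbc, hbc.symm, hq]
    lia
  refine ncard_edgeSet_le_card_mul (S := S) (fun v => ?_) fun b c hbc => ?_
  · calc #(S v) ≤ 2 + (2 * (Nat.log 2 M + 1) + (Nat.log 2 M + 1)) :=
          (card_union_le _ _).trans <| add_le_add (card_lowNeighbors_threshold_le v) <|
            (card_union_le _ _).trans <| add_le_add (card_sparseNeighbors_le hr hM v)
              (card_denseNeighbors_le hfree hr hM v)
      _ = 3 * Nat.log 2 M + 5 := by ring
  · obtain hq | hq := le_total (threshold G r M c) (threshold G r M b)
    · exact hcover hbc hq
    · exact (hcover hbc.symm hq).symm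

end UpperBound

theorem IsP5Copy.of_label_lt_imp {V : Type*} {G : SimpleGraph V} {r r' : Sym2 V → ℕ}
    (h : ∀ e ∈ G.edgeSet, ∀ e' ∈ G.edgeSet, r e < r e' → r' e < r' e') {v₀ v₁ v₂ v₃ v₄ : V}
    (hP : IsP5Copy G r v₀ v₁ v₂ v₃ v₄) : IsP5Copy G r' v₀ v₁ v₂ v₃ v₄ where
  nodup := hP.nodup
  adj₀₁ := hP.adj₀₁
  adj₁₂ := hP.adj₁₂
  adj₂₃ := hP.adj₂₃
  adj₃₄ := hP.adj₃₄
  lt₀₃ := h _ hP.adj₀₁ _ hP.adj₃₄ hP.lt₀₃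
  lt₃₂ := h _ hP.adj₃₄ _ hP.adj₂₃ hP.lt₃₂
  lt₂₁ := h _ hP.adj₂₃ _ hP.adj₁₂ hP.lt₂₁

theorem ncard_edgeSet_le_card_mul_log {V : Type*} [Fintype V] {G : SimpleGraph V} {r : Sym2 V → ℕ}
    (hr : G.edgeSet.InjOn r) (hfree : ∀ v₀ v₁ v₂ v₃ v₄, ¬ IsP5Copy G r v₀ v₁ v₂ v₃ v₄) :
    G.edgeSet.ncard ≤ Fintype.card V * (3 * Nat.log 2 G.edgeSet.ncard + 5) := by
  have hfin : G.edgeSet.Finite := G.edgeSet.toFinite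
  refine ncard_edgeSet_le_of_label_lt (r := rankOn G.edgeSet r) (fun v₀ v₁ v₂ v₃ v₄ h => ?_)
    (injOn_rankOn hfin hr) fun e he => rankOn_lt_ncard hfin he
  exact hfree v₀ v₁ v₂ v₃ v₄ <|
    h.of_label_lt_imp fun e he e' _ => (rankOn_lt_rankOn_iff hfin he).1

theorem avoidsFam_P5_1432_iff {G : EOGraph} : G.AvoidsFam {P5_1432} ↔
    ∀ v₀ v₁ v₂ v₃ v₄, ¬ IsP5Copy G.graph G.label v₀ v₁ v₂ v₃ v₄ := by
  simp only [EOGraph.AvoidsFam, EOGraph.Avoids, Set.mem_singleton_iff, forall_eq,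
    contains_P5_1432_iff, not_exists]

theorem log_two_sq_le (n : ℕ) : Nat.log 2 (n ^ 2) ≤ 2 * Nat.log 2 n + 1 := by
  refine Nat.le_of_lt_succ (Nat.log_lt_of_lt_pow' (Nat.succ_ne_zero _) ?_)
  calc n ^ 2 < (2 ^ (Nat.log 2 n + 1)) ^ 2 := by
        gcongr
        exact Nat.lt_pow_succ_log_self one_lt_two n
    _ = 2 ^ (2 * Nat.log 2 n + 1 + 1) := by ring

theorem lexFam_P5_1432_le (n : ℕ) : lexFam n {P5_1432} ≤ n * (6 * Nat.log 2 n + 8) := by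
  refine EOGraph.lexFam_le ?_
  rintro G rfl hG hfree
  have hlog : Nat.log 2 G.edges ≤ 2 * Nat.log 2 G.nv + 1 :=
    (Nat.log_mono_right (G.edges_le_choose_two.trans (Nat.choose_le_pow _ _))).trans
      (log_two_sq_le G.nv)
  calc G.edges ≤ Fintype.card (Fin G.nv) * (3 * Nat.log 2 G.edges + 5) :=
        ncard_edgeSet_le_card_mul_log (fun e he e' he' => hG e he e' he')
          (avoidsFam_P5_1432_iff.1 hfree)
    _ ≤ G.nv * (6 * Nat.log 2 G.nv + 8) := by
        rw [Fintype.card_fin]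
        exact Nat.mul_le_mul_left _ (by lia)

section LowerBound

variable {n : ℕ}

/-- `u` lies in the first half of `Fin n`, `v` in the second, and their positions within the two
halves differ by `2 ^ k - 1` for some `k`. -/
def IsPowShift (u v : Fin n) : Prop :=
  (u : ℕ) < n / 2 ∧ n / 2 ≤ v ∧ ∃ k, (v : ℕ) + 1 = n / 2 + u + 2 ^ k

variable (n) in
/-- The bipartite graph on the two halves of `Fin n` with `IsPowShift` as adjacency. -/
def powShiftGraph : SimpleGraph (Fin n) := SimpleGraph.fromRel IsPowShift

variable (n) in
/-- Edge labels that order the pairs `u ≤ v` reverse lexicographically. -/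
def revLexLabel : Sym2 (Fin n) → ℕ := symLabel fun u v => n * u.rev + v.rev

theorem revLexLabel_lt_iff {u v u' v' : Fin n} (h : u ≤ v) (h' : u' ≤ v') :
    revLexLabel n s(u, v) < revLexLabel n s(u', v') ↔ u' < u ∨ u' = u ∧ v' < v := by
  have key {a b c d : Fin n} (h : c < a) : n * (a.rev : ℕ) + b.rev < n * c.rev + d.rev :=
    calc n * (a.rev : ℕ) + b.rev < n * (a.rev + 1) := by lia
      _ ≤ n * c.rev := Nat.mul_le_mul_left n (Fin.rev_lt_rev.2 h)
      _ ≤ n * c.rev + d.rev := Nat.le_add_right _ _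
  rw [revLexLabel, symLabel_mk_of_le _ h, symLabel_mk_of_le _ h']
  obtain hlt | rfl | hgt := lt_trichotomy u u'
  · simp only [hlt.not_gt, hlt.ne', false_and, or_self, iff_false, not_lt, (key hlt).le]
  · simp only [add_lt_add_iff_left, Fin.val_fin_lt, Fin.rev_lt_rev, lt_irrefl, true_and, false_or]
  · simp only [hgt, true_or, key hgt]

theorem revLexLabel_injective : Function.Injective (revLexLabel n) := by
  intro e e' h
  induction e with | _ u v
  induction e' with | _ u' v'
  wlog huv : u ≤ v generalizing u v
  · rw [Sym2.eq_swap] at h ⊢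
    exact this v u h (le_of_not_ge huv)
  wlog huv' : u' ≤ v' generalizing u' v'
  · rw [Sym2.eq_swap (a := u')] at h ⊢
    exact this v' u' h (le_of_not_ge huv')
  have hlt := (revLexLabel_lt_iff huv huv').not.1 h.not_lt
  have hgt := (revLexLabel_lt_iff huv' huv).not.1 h.not_gt
  have : u = u' ∧ v = v' := by lia
  rw [this.1, this.2]

theorem IsPowShift.le {u v : Fin n} (h : IsPowShift u v) : u ≤ v := (h.1.trans_le h.2.1).le

theorem IsPowShift.adj {u v : Fin n} (h : IsPowShift u v) : (powShiftGraph n).Adj u v :=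
  (SimpleGraph.fromRel_adj _ _ _).2 ⟨Fin.ne_of_lt (h.1.trans_le h.2.1), .inl h⟩

theorem isPowShift_of_adj_of_lt_half {u v : Fin n} (h : (powShiftGraph n).Adj u v)
    (hu : (u : ℕ) < n / 2) : IsPowShift u v :=
  ((SimpleGraph.fromRel_adj _ _ _).1 h).2.resolve_right fun h' => h'.2.1.not_gt hu

theorem isPowShift_of_adj_of_half_le {u v : Fin n} (h : (powShiftGraph n).Adj u v)
    (hu : n / 2 ≤ (u : ℕ)) : IsPowShift v u :=
  ((SimpleGraph.fromRel_adj _ _ _).1 h).2.resolve_left fun h' => h'.1.not_ge hu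

theorem two_mul_two_pow_le_of_lt {i k : ℕ} (h : 2 ^ k < 2 ^ i) : 2 * 2 ^ k ≤ 2 ^ i := by
  rw [← pow_succ']
  exact Nat.pow_le_pow_right two_pos ((Nat.pow_lt_pow_iff_right one_lt_two).1 h)

theorem not_isP5Copy_of_lt_half {v₀ v₁ v₂ v₃ v₄ : Fin n} (hv₀ : (v₀ : ℕ) < n / 2) :
    ¬ IsP5Copy (powShiftGraph n) (revLexLabel n) v₀ v₁ v₂ v₃ v₄ := by
  intro h
  have h₀₁ := isPowShift_of_adj_of_lt_half h.adj₀₁ hv₀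
  have h₂₁ := isPowShift_of_adj_of_half_le h.adj₁₂ h₀₁.2.1
  have h₂₃ := isPowShift_of_adj_of_lt_half h.adj₂₃ h₂₁.1
  have h₄₃ := isPowShift_of_adj_of_half_le h.adj₃₄ h₂₃.2.1
  have lt₀₃ := h.lt₀₃
  have lt₃₂ := h.lt₃₂
  have lt₂₁ := h.lt₂₁
  rw [Sym2.eq_swap (a := v₃), revLexLabel_lt_iff h₀₁.le h₄₃.le] at lt₀₃
  rw [Sym2.eq_swap (a := v₃), revLexLabel_lt_iff h₄₃.le h₂₃.le] at lt₃₂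
  rw [Sym2.eq_swap (a := v₁), revLexLabel_lt_iff h₂₃.le h₂₁.le] at lt₂₁
  obtain ⟨k, hk⟩ := h₂₁.2.2
  obtain ⟨i, hi⟩ := h₂₃.2.2
  obtain ⟨j, hj⟩ := h₄₃.2.2
  obtain ⟨m, hm⟩ := h₀₁.2.2
  have hk_le : 2 * 2 ^ k ≤ 2 ^ i := two_mul_two_pow_le_of_lt (by lia)
  have hj_le : 2 * 2 ^ j ≤ 2 ^ i := two_mul_two_pow_le_of_lt (by lia)
  have hm_pos : 0 < 2 ^ m := Nat.two_pow_pos m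
  have hv₂₄ : (v₂ : ℕ) + 2 ^ k ≤ v₄ := by lia
  have hv₀₂ : (v₀ : ℕ) < v₂ + 2 ^ k := by lia
  have hv₄₀ : (v₄ : ℕ) ≤ v₀ := by lia
  exact (hv₂₄.trans hv₄₀).not_gt hv₀₂

theorem not_isP5Copy_of_half_le {v₀ v₁ v₂ v₃ v₄ : Fin n} (hv₀ : n / 2 ≤ (v₀ : ℕ)) :
    ¬ IsP5Copy (powShiftGraph n) (revLexLabel n) v₀ v₁ v₂ v₃ v₄ := by
  intro h
  have h₁₀ := isPowShift_of_adj_of_half_le h.adj₀₁ hv₀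
  have h₁₂ := isPowShift_of_adj_of_lt_half h.adj₁₂ h₁₀.1
  have h₃₂ := isPowShift_of_adj_of_half_le h.adj₂₃ h₁₂.2.1
  have h₃₄ := isPowShift_of_adj_of_lt_half h.adj₃₄ h₃₂.1
  have lt₀₃ := h.lt₀₃
  have lt₂₁ := h.lt₂₁
  rw [Sym2.eq_swap (a := v₀), revLexLabel_lt_iff h₁₀.le h₃₄.le] at lt₀₃
  rw [Sym2.eq_swap (a := v₂), revLexLabel_lt_iff h₃₂.le h₁₂.le] at lt₂₁
  lia

theorem mul_log_le_ncard_edgeSet_powShiftGraph {a : ℕ} (ha : 4 * a ≤ n + 2) :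
    a * (Nat.log 2 a + 1) ≤ (powShiftGraph n).edgeSet.ncard := by
  have hpow (p : Fin a × Fin (Nat.log 2 a + 1)) : 2 ^ (p.2 : ℕ) ≤ a :=
    (Nat.le_log_iff_pow_le one_lt_two p.1.pos.ne').1 p.2.is_le
  let u (p : Fin a × Fin (Nat.log 2 a + 1)) : Fin n := ⟨p.1, by lia⟩
  let v (p : Fin a × Fin (Nat.log 2 a + 1)) : Fin n :=
    ⟨n / 2 + p.1 + 2 ^ (p.2 : ℕ) - 1, by have := hpow p; lia⟩
  have hv (p) : (v p : ℕ) + 1 = n / 2 + u p + 2 ^ (p.2 : ℕ) :=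
    Nat.sub_add_cancel (Nat.two_pow_pos p.2 |>.trans_le (Nat.le_add_left _ _))
  have huv (p) : IsPowShift (u p) (v p) := by
    have hu : (u p : ℕ) < a := p.1.is_lt
    have hle : n / 2 ≤ v p := by
      have := hv p
      have := Nat.two_pow_pos p.2
      lia
    exact ⟨by lia, hle, p.2, hv p⟩
  have hinj : Function.Injective fun p => s(u p, v p) := by
    intro p p' h
    obtain ⟨hu_eq, hv_eq⟩ | ⟨hu_eq, -⟩ := Sym2.eq_iff.1 h
    · have hpow_eq : 2 ^ (p.2 : ℕ) = 2 ^ (p'.2 : ℕ) := by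
        have := hv p
        rw [hu_eq, hv_eq, hv p'] at this
        lia
      exact Prod.ext (Fin.ext (congrArg Fin.val hu_eq :))
        (Fin.ext (Nat.pow_right_injective le_rfl hpow_eq))
    · exact absurd (congrArg Fin.val hu_eq) ((huv p).1.trans_le (huv p').2.1).ne
  calc a * (Nat.log 2 a + 1) = (Set.range fun p => s(u p, v p)).ncard := by
        rw [Set.ncard_range_of_injective hinj]
        simp
    _ ≤ (powShiftGraph n).edgeSet.ncard :=
        Set.ncard_le_ncard (Set.range_subset_iff.2 fun p => (huv p).adj) (Set.toFinite _)

theorem mul_log_le_lexFam_P5_1432 {a : ℕ} (ha : 4 * a ≤ n + 2) :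
    a * (Nat.log 2 a + 1) ≤ lexFam n {P5_1432} := by
  refine (mul_log_le_ncard_edgeSet_powShiftGraph ha).trans
    (EOGraph.edges_le_lexFam (G := ⟨n, powShiftGraph n, revLexLabel n⟩)
      (fun _ _ _ _ h => revLexLabel_injective h) (avoidsFam_P5_1432_iff.2 fun v₀ _ _ _ _ => ?_))
  obtain hv₀ | hv₀ := lt_or_ge (v₀ : ℕ) (n / 2)
  · exact not_isP5Copy_of_lt_half hv₀
  · exact not_isP5Copy_of_half_le hv₀

theorem mul_log_add_one_le_lexFam_P5_1432 (hn : 2 ≤ n) :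
    n * (Nat.log 2 n + 1) ≤ 15 * lexFam n {P5_1432} := by
  set a := (n + 2) / 4
  have hlog : Nat.log 2 n - 2 ≤ Nat.log 2 a := by
    rw [← Nat.log_div_base_pow]
    exact Nat.log_mono_right (Nat.div_le_div_right (Nat.le_add_right n 2))
  calc n * (Nat.log 2 n + 1) ≤ 5 * a * (3 * (Nat.log 2 a + 1)) :=
        Nat.mul_le_mul (by lia) (by lia)
    _ = 15 * (a * (Nat.log 2 a + 1)) := by ring
    _ ≤ 15 * lexFam n {P5_1432} := Nat.mul_le_mul_left 15 (mul_log_le_lexFam_P5_1432 (by lia))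

end LowerBound

/-- `lex(n, P_5^{1432}) = Θ(n log n)`. -/
theorem lex_P5_1432 :
    ∃ c C : ℝ, 0 < c ∧ 0 < C ∧ ∀ n : ℕ, 2 ≤ n →
      c * (n : ℝ) * Real.logb 2 (n : ℝ) ≤ (lexFam n {P5_1432} : ℝ) ∧
      (lexFam n {P5_1432} : ℝ) ≤ C * (n : ℝ) * Real.logb 2 (n : ℝ) := by
  refine ⟨1 / 15, 14, by norm_num, by norm_num, fun n hn => ?_⟩
  have hlower : (n : ℝ) * (Nat.log 2 n + 1) ≤ 15 * lexFam n {P5_1432} :=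
    mod_cast mul_log_add_one_le_lexFam_P5_1432 hn
  have hupper : (lexFam n {P5_1432} : ℝ) ≤ n * (6 * Nat.log 2 n + 8) :=
    mod_cast lexFam_P5_1432_le n
  have hlog_le : (Nat.log 2 n : ℝ) ≤ Real.logb 2 n := mod_cast Real.natLog_le_logb n 2
  have hle_log : Real.logb 2 n ≤ Nat.log 2 n + 1 := by
    rw [← Real.natFloor_logb_natCast]
    exact (Nat.lt_floor_add_one _).le
  have hone_le : (1 : ℝ) ≤ Nat.log 2 n := mod_cast Nat.log_pos one_lt_two hn
  constructor
  · have : n * Real.logb 2 n ≤ n * (Nat.log 2 n + 1) := by gcongr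
    linarith
  · calc (lexFam n {P5_1432} : ℝ) ≤ n * (6 * Nat.log 2 n + 8) := hupper
      _ ≤ n * (14 * Real.logb 2 n) := by
          gcongr
          linarith
      _ = 14 * n * Real.logb 2 n := by ring
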